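/- Let A be the real 4×8 matrix with rows (1,0,0,0,0,1,1,2), (0,1,0,0,1,0,1,1), (0,0,1,0,1,1,0,1), (0,0,0,1,2,1,1,0), with columns labeled 0,…,7. Let the bases of the matroid P₈ be the 4-element subsets B ⊆ {0,…,7} with det(A[B]) ≠ 0, and let the bases of the matroid P₁ be the bases of P₈ together with the set {3,5,6,7}. Then there is no homogeneous stable polynomial P ∈ ℝ[x₀,…,x₇] whose support equals {𝟙_B : B a basis of P₁}; that is, P₁ does not have the weak half-plane property. -/

import Mathlib

open scoped Classical

/-- `P` is stable: it has no zero `z ∈ ℂ^E` with all imaginary parts positive. -/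
def IsStablePoly {σ : Type*} (P : MvPolynomial σ ℝ) : Prop :=
  ∀ z : σ → ℂ, (∀ i, 0 < (z i).im) → MvPolynomial.aeval z P ≠ 0

/-- The support of a multivariate polynomial, as a set of exponent vectors. -/
def suppSet {σ : Type*} (P : MvPolynomial σ ℝ) : Set (σ → ℕ) :=
  (fun m : σ →₀ ℕ => (m : σ → ℕ)) '' ↑P.support

/-- The determinant of the `d × d` submatrix `A[B]` of `A` with columns indexed by the
`d`-element subset `B` (in increasing order), and `0` if `B` does not have `d` elements. -/
noncomputable def minorDet {d n : ℕ} (A : Matrix (Fin d) (Fin n) ℝ) (B : Finset (Fin n)) : ℝ :=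
  if h : B.card = d then (A.submatrix id fun i => ((B.orderIsoOfFin h) i : Fin n)).det
  else 0

/-- The representing matrix of the matroid `P₈`. -/
noncomputable def matP8 : Matrix (Fin 4) (Fin 8) ℝ :=
  !![1, 0, 0, 0, 0, 1, 1, 2;
     0, 1, 0, 0, 1, 0, 1, 1;
     0, 0, 1, 0, 1, 1, 0, 1;
     0, 0, 0, 1, 2, 1, 1, 0]

/-- The bases of the matroid `P₁`, the relaxation of `P₈` by `{3,5,6,7}`: the 4-element
subsets `B` of the columns with `det A[B] ≠ 0`, together with `{3,5,6,7}`. -/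
def isBasisP1 (B : Finset (Fin 8)) : Prop :=
  minorDet matP8 B ≠ 0 ∨ B = {3, 5, 6, 7}

/-!
Let `c B` be the coefficients of a homogeneous stable polynomial supported on the bases of `P₁`.
All of them have the same sign (`coeff_mul_nonneg`). Stability gives the Rayleigh inequality
`f(0,0) f(1,1) ≤ f(1,0) f(0,1)` in any two of the variables, at all real values of the others
(`MAStable.rayleigh`), and the inequality passes to partial derivatives (`Rayleigh.contr`).

Suppose that for a pair `S` one of `S ∪ {i, j}`, `S ∪ {k, l}` is a nonbasis. The Rayleigh inequality
of the derivative along `S` then says that a binary quadratic form with square discriminant is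
nonnegative, which forces `c(Sik) c(Sjl) = c(Sil) c(Sjk)` (`quadrangle`).

Rescaling the variables and the polynomial makes eight coefficients equal to `1`. With
`t = c {1, 2, 3, 7} > 0`, a chain of such relations (`validChain_quads`) yields `c B = t ^ wt B` for
every basis `B` of `P₈`, where `wt B = log₂ |det A[B]|`. The only other coefficient is
`ε = c {3, 5, 6, 7} > 0`. At `x = (·, ·, 1, -1, -1, -1, -1, 1)` with the coordinates `0` and `1`
running over `{0, 1}` the polynomial takes the values `f(0,0) = -1 - ε`, `f(1,0) = 2 t - ε` and
`f(0,1) = f(1,1) = -ε`, so that `f(1,0) f(0,1) - f(0,0) f(1,1) = -ε (1 + 2 t) < 0`, contradicting the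
Rayleigh inequality (`not_stable_normalised`).
-/

/-! ### The bases of `P₁` -/

/-- The nonbases of `P₁` among the 4-element sets: the nine circuit-hyperplanes of `P₈` other
than `{3,5,6,7}`. -/
def nonbases : List (Finset (Fin 8)) :=
  [{0, 1, 2, 7}, {0, 1, 3, 6}, {0, 2, 3, 5}, {0, 3, 4, 7}, {0, 4, 5, 6}, {1, 2, 3, 4},
   {1, 2, 5, 6}, {1, 4, 5, 7}, {2, 4, 6, 7}]

/-- The integer version of `matP8`. -/
def matZ : Matrix (Fin 4) (Fin 8) ℤ :=
  !![1, 0, 0, 0, 0, 1, 1, 2;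
     0, 1, 0, 0, 1, 0, 1, 1;
     0, 0, 1, 0, 1, 1, 0, 1;
     0, 0, 0, 1, 2, 1, 1, 0]

/-- The `2 × 2` minor of `matZ` with rows `r, s` and columns `a, b`. -/
def minor2 (r s : Fin 4) (a b : Fin 8) : ℤ := matZ r a * matZ s b - matZ r b * matZ s a

/-- The maximal minor of `matZ` with columns `a, b, c, d`, by Laplace expansion along the first two
rows; in this form it is cheap to evaluate in the kernel. -/
def detZ (a b c d : Fin 8) : ℤ :=
  minor2 0 1 a b * minor2 2 3 c d - minor2 0 1 a c * minor2 2 3 b d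
    + minor2 0 1 a d * minor2 2 3 b c + minor2 0 1 b c * minor2 2 3 a d
    - minor2 0 1 b d * minor2 2 3 a c + minor2 0 1 c d * minor2 2 3 a b

theorem matP8_eq (i : Fin 4) (j : Fin 8) : matP8 i j = (matZ i j : ℝ) := by
  fin_cases i <;> fin_cases j <;> simp [matP8, matZ]

theorem det_submatrix_matP8 (e : Fin 4 → Fin 8) :
    (matP8.submatrix id e).det = (detZ (e 0) (e 1) (e 2) (e 3) : ℝ) := by
  simp only [Matrix.det_succ_row_zero, Fin.sum_univ_succ, Matrix.submatrix_apply, matP8_eq, detZ,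
    minor2]
  simp [Fin.succAbove, Fin.lt_def]
  ring

set_option maxRecDepth 100000 in
theorem detZ_table : ∀ a b : Fin 8, a < b → ∀ c, b < c → ∀ d, c < d →
    ((detZ a b c d ≠ 0 ∨ ({a, b, c, d} : Finset (Fin 8)) = {3, 5, 6, 7}) ↔
      ({a, b, c, d} : Finset (Fin 8)) ∉ nonbases) := by
  decide +kernel

theorem isBasisP1_iff (B : Finset (Fin 8)) :
    isBasisP1 B ↔ B.card = 4 ∧ B ∉ nonbases := by
  by_cases h : B.card = 4
  · have hB : B = {B.orderEmbOfFin h 0, B.orderEmbOfFin h 1, B.orderEmbOfFin h 2,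
        B.orderEmbOfFin h 3} := by
      have hu : (Finset.univ : Finset (Fin 4)) = {0, 1, 2, 3} := by decide
      have hi := Finset.image_orderEmbOfFin_univ B h
      rw [hu] at hi
      simpa only [Finset.image_insert, Finset.image_singleton] using hi.symm
    have hd : minorDet matP8 B = (detZ (B.orderEmbOfFin h 0) (B.orderEmbOfFin h 1)
        (B.orderEmbOfFin h 2) (B.orderEmbOfFin h 3) : ℝ) := by
      rw [minorDet, dif_pos h, ← det_submatrix_matP8]
      rfl
    have hlt : ∀ i j : Fin 4, i < j → B.orderEmbOfFin h i < B.orderEmbOfFin h j :=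
      fun i j hij => (B.orderEmbOfFin h).strictMono hij
    have key := detZ_table _ _ (hlt 0 1 (by decide)) _ (hlt 1 2 (by decide)) _
      (hlt 2 3 (by decide))
    rw [← hB] at key
    simp only [isBasisP1, hd, h, true_and, ← key, ne_eq, Int.cast_eq_zero]
  · have hM : B ≠ {3, 5, 6, 7} := by
      rintro rfl
      exact h (by decide)
    simp [isBasisP1, minorDet, h, hM]

/-! ### Combinatorial data: the chain of quadrangles and the test point -/

/-- The exponent `log₂ |det A[B]|` of a basis `B` of `P₈` (and `0` for other sets). -/
def wt (B : Finset (Fin 8)) : ℕ :=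
  if B ∈ ([{1, 2, 4, 7}, {1, 4, 6, 7}, {2, 4, 5, 7}, {4, 5, 6, 7}] : List (Finset (Fin 8))) then 2
  else if B ∈ ([{0, 1, 2, 4}, {0, 1, 4, 7}, {0, 2, 4, 7}, {0, 4, 5, 7}, {0, 4, 6, 7}, {0, 5, 6, 7},
    {1, 2, 3, 7}, {1, 2, 4, 5}, {1, 2, 4, 6}, {1, 2, 5, 7}, {1, 2, 6, 7}, {1, 3, 4, 7},
    {1, 4, 5, 6}, {1, 5, 6, 7}, {2, 3, 4, 7}, {2, 4, 5, 6}, {2, 5, 6, 7}, {3, 4, 5, 6},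
    {3, 4, 5, 7}, {3, 4, 6, 7}] : List (Finset (Fin 8))) then 1
  else 0

/-- A tuple `(s, s', i, j, k, l)`, standing for the four sets `S ∪ {i, k}`, `S ∪ {i, l}`,
`S ∪ {j, k}`, `S ∪ {j, l}` with `S = {s, s'}`. It is a degenerate quadrangle if the six elements are
distinct and one of `S ∪ {i, j}`, `S ∪ {k, l}` is a nonbasis. -/
abbrev Quad := Fin 8 × Fin 8 × Fin 8 × Fin 8 × Fin 8 × Fin 8

/-- The set `S ∪ {j, l}` whose coefficient a quadrangle determines from those of `S ∪ {i, k}`,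
`S ∪ {i, l}` and `S ∪ {j, k}`. -/
def Quad.new : Quad → Finset (Fin 8)
  | (s, s', _, j, _, l) => {s, s', j, l}

/-- `q` is a degenerate quadrangle, three of its bases belong to `K`, and the exponents `wt`
satisfy the relation that it imposes. -/
def Quad.Valid (K : List (Finset (Fin 8))) : Quad → Prop
  | (s, s', i, j, k, l) => [s, s', i, j, k, l].Nodup ∧
      ({s, s', i, j} ∈ nonbases ∨ {s, s', k, l} ∈ nonbases) ∧
      {s, s', i, k} ∈ K ∧ {s, s', i, l} ∈ K ∧ {s, s', j, k} ∈ K ∧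
      wt {s, s', i, k} + wt {s, s', j, l} = wt {s, s', i, l} + wt {s, s', j, k}

instance (K : List (Finset (Fin 8))) : DecidablePred (Quad.Valid K) := fun q => by
  obtain ⟨s, s', i, j, k, l⟩ := q
  unfold Quad.Valid
  infer_instance

/-- Every quadrangle in the list is valid relative to `K` and the bases determined before it. -/
def ValidChain : List (Finset (Fin 8)) → List Quad → Prop
  | _, [] => True
  | K, q :: L => q.Valid K ∧ ValidChain (q.new :: K) L

instance decidableValidChain : ∀ K L, Decidable (ValidChain K L)
  | _, [] => isTrue trivial
  | K, q :: L => by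
    have := decidableValidChain (q.new :: K) L
    unfold ValidChain
    infer_instance

/-- The bases from which the relations determine all others: the coefficients of the first eight can
be scaled to `1`, that of the last one is the remaining parameter `t`. -/
def startBases : List (Finset (Fin 8)) :=
  [{0, 1, 2, 3}, {0, 1, 2, 5}, {1, 2, 3, 6}, {0, 2, 3, 4}, {0, 1, 3, 7}, {0, 1, 3, 5},
   {0, 2, 3, 6}, {0, 1, 3, 4}, {1, 2, 3, 7}]

/-- A sequence of degenerate quadrangles which determines the coefficients of all other bases of
`P₈`. -/
def quads : List Quad :=
  [(0, 1, 2, 7, 3, 5), (0, 2, 1, 4, 3, 5), (0, 2, 1, 6, 3, 5), (0, 3, 1, 4, 2, 5),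
   (0, 3, 1, 6, 2, 4), (0, 3, 1, 2, 4, 7), (0, 3, 1, 6, 2, 5), (0, 3, 1, 7, 2, 5),
   (0, 3, 1, 6, 2, 7), (0, 4, 5, 6, 3, 2), (0, 5, 1, 7, 3, 2), (1, 2, 0, 7, 3, 5),
   (1, 3, 0, 6, 2, 4), (1, 3, 0, 7, 2, 4), (1, 3, 0, 6, 2, 5), (1, 3, 0, 6, 2, 7),
   (2, 3, 0, 6, 1, 4), (2, 3, 0, 7, 1, 4), (2, 4, 6, 7, 3, 0), (2, 5, 0, 7, 1, 6),
   (2, 7, 0, 1, 3, 4), (3, 4, 0, 7, 1, 5), (3, 4, 0, 7, 1, 6), (4, 6, 2, 7, 3, 0),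
   (4, 7, 2, 1, 3, 0), (4, 7, 0, 1, 2, 6), (4, 7, 1, 5, 3, 0), (4, 7, 0, 6, 1, 5),
   (4, 7, 0, 5, 6, 2), (5, 7, 0, 3, 4, 1), (5, 7, 0, 6, 4, 1), (6, 7, 4, 2, 5, 0),
   (6, 7, 4, 2, 5, 1), (6, 7, 5, 3, 4, 2), (0, 1, 3, 4, 7, 2), (0, 2, 3, 6, 7, 1),
   (0, 5, 2, 7, 4, 6), (0, 6, 2, 4, 3, 1), (0, 6, 2, 5, 3, 1), (0, 6, 2, 7, 3, 1),
   (1, 2, 0, 6, 3, 4), (1, 2, 0, 3, 6, 5), (1, 2, 0, 4, 6, 5), (1, 3, 0, 5, 2, 4),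
   (1, 4, 7, 5, 2, 0), (1, 4, 0, 6, 7, 5), (2, 3, 0, 5, 1, 4), (2, 3, 0, 5, 1, 6),
   (2, 3, 0, 5, 1, 7), (2, 4, 0, 5, 7, 6), (4, 5, 0, 6, 1, 3)]

set_option maxRecDepth 100000 in
theorem validChain_quads : ValidChain startBases quads := by
  decide +kernel

set_option maxRecDepth 100000 in
theorem bases_covered : ∀ B : Finset (Fin 8), B.card = 4 → B ∉ nonbases → B ≠ {3, 5, 6, 7} →
    B ∈ startBases ∨ B ∈ quads.map Quad.new := by
  decide +kernel

/-- The sign pattern at which the Rayleigh inequality fails, with free coordinates `0` and `1`. -/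
def testPt (a b : ℤ) : Fin 8 → ℤ := ![a, b, 1, -1, -1, -1, -1, 1]

/-- The indicator of the bases of `P₈` of weight `k`. -/
def layerCoeff (k : ℕ) (B : Finset (Fin 8)) : ℤ :=
  if B.card = 4 ∧ B ∉ nonbases ∧ B ≠ {3, 5, 6, 7} ∧ wt B = k then 1 else 0

/-- The coefficient of `t ^ k` in the value at an integral point `y` of the normalised polynomial
`∑ t ^ wt B x ^ B` over the bases `B` of `P₈`. -/
def layer (k : ℕ) (y : Fin 8 → ℤ) : ℤ :=
  ∑ B : Finset (Fin 8), layerCoeff k B * ∏ i ∈ B, y i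

theorem layer_table :
    (layer 0 (testPt 0 0) = -1 ∧ layer 1 (testPt 0 0) = 0 ∧ layer 2 (testPt 0 0) = 0) ∧
    (layer 0 (testPt 1 0) = 0 ∧ layer 1 (testPt 1 0) = 2 ∧ layer 2 (testPt 1 0) = 0) ∧
    (layer 0 (testPt 0 1) = 0 ∧ layer 1 (testPt 0 1) = 0 ∧ layer 2 (testPt 0 1) = 0) ∧
    (layer 0 (testPt 1 1) = 0 ∧ layer 1 (testPt 1 1) = 0 ∧ layer 2 (testPt 1 1) = 0) := by
  decide +kernel

theorem layer_cast (k : ℕ) (y : Fin 8 → ℤ) :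
    (layer k y : ℝ) = ∑ B : Finset (Fin 8), (layerCoeff k B : ℝ) * ∏ i ∈ B, (y i : ℝ) := by
  simp [layer]

attribute [irreducible] layer

theorem wt_le_two (B : Finset (Fin 8)) : wt B = 0 ∨ wt B = 1 ∨ wt B = 2 := by
  unfold wt
  split_ifs <;> simp

/-! ### Multiaffine polynomials and the Rayleigh inequality -/

/-- The value at `z` of the multiaffine polynomial with coefficients `c`, in any real algebra. -/
def maEval {R : Type*} [CommRing R] [Algebra ℝ R] (c : Finset (Fin 8) → ℝ) (z : Fin 8 → R) : R :=
  ∑ B : Finset (Fin 8), algebraMap ℝ R (c B) * ∏ i ∈ B, z i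

/-- Coefficients of the part of a multiaffine polynomial free of `x_s`. -/
def del (c : Finset (Fin 8) → ℝ) (s : Fin 8) : Finset (Fin 8) → ℝ :=
  fun B => if s ∈ B then 0 else c B

/-- Coefficients of the derivative of a multiaffine polynomial in `x_s`. -/
def contr (c : Finset (Fin 8) → ℝ) (s : Fin 8) : Finset (Fin 8) → ℝ :=
  fun B => if s ∈ B then 0 else c (insert s B)

theorem maEval_update {R : Type*} [CommRing R] [Algebra ℝ R] (c : Finset (Fin 8) → ℝ)
    (z : Fin 8 → R) (s : Fin 8) (w : R) :
    maEval c (Function.update z s w) = maEval (del c s) z + w * maEval (contr c s) z := by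
  have split : ∀ f : Finset (Fin 8) → R, ∑ B, f B =
      ∑ B ∈ (Finset.univ.erase s).powerset, f B +
        ∑ B ∈ (Finset.univ.erase s).powerset, f (insert s B) := by
    intro f
    rw [← Finset.sum_powerset_insert (Finset.notMem_erase s _),
      Finset.insert_erase (Finset.mem_univ s), Finset.powerset_univ]
  simp only [maEval, split]
  have hs : ∀ B ∈ (Finset.univ.erase s).powerset, s ∉ B := by
    intro B hB h
    exact Finset.notMem_erase s _ (Finset.mem_powerset.1 hB h)
  have h1 : ∑ B ∈ (Finset.univ.erase s).powerset,
      algebraMap ℝ R (del c s (insert s B)) * ∏ i ∈ insert s B, z i = 0 :=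
    Finset.sum_eq_zero fun B _ => by simp [del]
  have h2 : ∑ B ∈ (Finset.univ.erase s).powerset,
      algebraMap ℝ R (contr c s (insert s B)) * ∏ i ∈ insert s B, z i = 0 :=
    Finset.sum_eq_zero fun B _ => by simp [contr]
  rw [h1, h2, add_zero, add_zero, Finset.mul_sum]
  congr 1
  · refine Finset.sum_congr rfl fun B hB => ?_
    rw [Finset.prod_update_of_notMem (hs B hB)]
    simp [del, hs B hB]
  · refine Finset.sum_congr rfl fun B hB => ?_
    rw [Finset.prod_insert (hs B hB), Finset.prod_update_of_notMem (hs B hB)]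
    simp only [contr, hs B hB, if_false, Function.update_self]
    ring

theorem maEval_zero (c : Finset (Fin 8) → ℝ) : maEval c (0 : Fin 8 → ℝ) = c ∅ := by
  rw [maEval, Finset.sum_eq_single ∅]
  · simp
  · intro B _ hB
    obtain ⟨i, hi⟩ := Finset.nonempty_iff_ne_empty.2 hB
    rw [Finset.prod_eq_zero hi (by simp), mul_zero]
  · simp

theorem maEval_ofReal (c : Finset (Fin 8) → ℝ) (x : Fin 8 → ℝ) :
    maEval c (fun i => (x i : ℂ)) = ((maEval c x : ℝ) : ℂ) := by
  simp [maEval]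

theorem continuous_maEval {R : Type*} [CommRing R] [Algebra ℝ R] [TopologicalSpace R]
    [IsTopologicalRing R] (c : Finset (Fin 8) → ℝ) :
    Continuous (maEval c : (Fin 8 → R) → R) := by
  unfold maEval
  fun_prop

/-- Stability of the multiaffine polynomial with coefficients `c`. -/
def MAStable (c : Finset (Fin 8) → ℝ) : Prop :=
  ∀ z : Fin 8 → ℂ, (∀ i, 0 < (z i).im) → maEval c z ≠ 0

/-- The Rayleigh inequality `∂ᵢf ∂ⱼf ≥ f ∂ᵢ∂ⱼf` on real points. For `f = a + b xᵢ + c xⱼ + d xᵢ xⱼ`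
it reads `bc ≥ ad`, equivalently `f(1,0) f(0,1) ≥ f(0,0) f(1,1)`. -/
def Rayleigh (c : Finset (Fin 8) → ℝ) (i j : Fin 8) : Prop :=
  ∀ x : Fin 8 → ℝ,
    maEval c (Function.update (Function.update x i 0) j 0) *
      maEval c (Function.update (Function.update x i 1) j 1) ≤
    maEval c (Function.update (Function.update x i 1) j 0) *
      maEval c (Function.update (Function.update x i 0) j 1)

/-- If `bc < ad` at a real point then, for `zᵢ = I`, the equation `f = 0` is solved by
`zⱼ = -(a + b I) / (c + d I)`, whose imaginary part `(ad - bc) / |c + d I|²` is positive; this persists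
when the other coordinates are moved slightly into the upper half-plane. -/
theorem MAStable.rayleigh {c : Finset (Fin 8) → ℝ} (hc : MAStable c) {i j : Fin 8} (hij : i ≠ j) :
    Rayleigh c i j := by
  intro x
  by_contra hlt
  rw [not_le] at hlt
  set p : ℝ → Fin 8 → ℂ := fun δ k => (x k : ℂ) + δ * Complex.I with hp
  have hpc : Continuous p := by fun_prop
  set num : ℝ → ℂ := fun δ => maEval (del c j) (Function.update (p δ) i Complex.I) with hnum
  set den : ℝ → ℂ := fun δ => maEval (contr c j) (Function.update (p δ) i Complex.I) with hden
  have hupd : Continuous fun δ => Function.update (p δ) i Complex.I :=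
    hpc.update i continuous_const
  have hnumc : Continuous num := (continuous_maEval _).comp hupd
  have hdenc : Continuous den := (continuous_maEval _).comp hupd
  have hp0 : p 0 = fun k => (x k : ℂ) := by simp [hp]
  have hnum0 : num 0 = ((maEval (del (del c j) i) x : ℝ) : ℂ) +
      Complex.I * ((maEval (contr (del c j) i) x : ℝ) : ℂ) := by
    simp only [hnum, hp0, maEval_update, maEval_ofReal]
  have hden0 : den 0 = ((maEval (del (contr c j) i) x : ℝ) : ℂ) +
      Complex.I * ((maEval (contr (contr c j) i) x : ℝ) : ℂ) := by
    simp only [hden, hp0, maEval_update, maEval_ofReal]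
  simp only [maEval_update] at hlt
  generalize maEval (del (del c j) i) x = A at *
  generalize maEval (contr (del c j) i) x = B at *
  generalize maEval (del (contr c j) i) x = C at *
  generalize maEval (contr (contr c j) i) x = D at *
  have hdet : B * C < A * D := by nlinarith
  have hCD : 0 < C ^ 2 + D ^ 2 := by
    rcases eq_or_ne C 0 with h | h
    · have : D ≠ 0 := by
        rintro rfl
        simp [h] at hdet
      positivity
    · positivity
  have hnorm : Complex.normSq (den 0) = C ^ 2 + D ^ 2 := by
    rw [hden0, Complex.normSq_apply]
    simp
    ring
  have hden_ne : den 0 ≠ 0 := by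
    intro h
    rw [h, map_zero] at hnorm
    exact hCD.ne hnorm
  have him : 0 < (-(num 0) / den 0).im := by
    rw [Complex.div_im, hnorm, hnum0, hden0]
    simp
    rw [neg_div, neg_div, neg_lt_neg_iff]
    exact div_lt_div_of_pos_right hdet hCD
  have hcont : ContinuousAt (fun δ => (-(num δ) / den δ).im) 0 :=
    Complex.continuous_im.continuousAt.comp
      (hnumc.neg.continuousAt.div hdenc.continuousAt hden_ne)
  have hev : ∀ᶠ δ in nhdsWithin (0 : ℝ) (Set.Ioi 0),
      0 < (-(num δ) / den δ).im ∧ den δ ≠ 0 ∧ 0 < δ := by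
    refine Filter.Eventually.and ?_ (Filter.Eventually.and ?_ self_mem_nhdsWithin)
    · exact (hcont.eventually (lt_mem_nhds him)).filter_mono nhdsWithin_le_nhds
    · exact (hdenc.continuousAt.eventually_ne hden_ne).filter_mono nhdsWithin_le_nhds
  obtain ⟨δ, h1, h2, h3⟩ := hev.exists
  refine hc (Function.update (Function.update (p δ) i Complex.I) j (-(num δ) / den δ)) ?_ ?_
  · intro k
    by_cases hkj : k = j
    · subst hkj
      simpa using h1
    · by_cases hki : k = i
      · subst hki
        simp [hkj]
      · simp [hkj, hki, hp, h3]
  · rw [maEval_update]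
    change num δ + -(num δ) / den δ * den δ = 0
    rw [div_mul_cancel₀ _ h2]
    ring

/-- The Rayleigh inequality for the derivative in `x_s` is the leading coefficient, in `x_s`, of the
one for the polynomial itself. -/
theorem Rayleigh.contr {c : Finset (Fin 8) → ℝ} {i j : Fin 8} (h : Rayleigh c i j) {s : Fin 8}
    (hi : s ≠ i) (hj : s ≠ j) : Rayleigh (contr c s) i j := by
  intro x
  have key : ∀ a b T : ℝ, maEval c (Function.update (Function.update (Function.update x s T) i a) j b)
      = maEval (del c s) (Function.update (Function.update x i a) j b) +
        T * maEval (_root_.contr c s) (Function.update (Function.update x i a) j b) := by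
    intro a b T
    rw [Function.update_comm hi, Function.update_comm hj, maEval_update]
  have hT : ∀ T, _ := fun T : ℝ => h (Function.update x s T)
  simp only [key] at hT
  generalize maEval (_root_.contr c s) (Function.update (Function.update x i 0) j 0) = G00 at *
  generalize maEval (_root_.contr c s) (Function.update (Function.update x i 1) j 0) = G10 at *
  generalize maEval (_root_.contr c s) (Function.update (Function.update x i 0) j 1) = G01 at *
  generalize maEval (_root_.contr c s) (Function.update (Function.update x i 1) j 1) = G11 at *
  generalize maEval (del c s) (Function.update (Function.update x i 0) j 0) = H00 at *
  generalize maEval (del c s) (Function.update (Function.update x i 1) j 0) = H10 at *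
  generalize maEval (del c s) (Function.update (Function.update x i 0) j 1) = H01 at *
  generalize maEval (del c s) (Function.update (Function.update x i 1) j 1) = H11 at *
  by_contra hneg
  rw [not_le] at hneg
  -- adding the inequalities at `T` and `-T` cancels the linear term; a large `T` then contradicts `0 < g`
  set g := G00 * G11 - G10 * G01 with hg
  have hgpos : 0 < g := by linarith
  set h0 := H00 * H11 - H10 * H01 with hh
  have e1 := hT ((|h0| + 1) / g + 1)
  have e2 := hT (-((|h0| + 1) / g + 1))
  set T := (|h0| + 1) / g + 1 with hTdef
  have hT1 : 1 ≤ T := by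
    have : 0 ≤ (|h0| + 1) / g := by positivity
    linarith
  have hgT : |h0| + 1 ≤ g * T := by
    rw [hTdef, mul_add, mul_div_cancel₀ _ hgpos.ne']
    linarith
  have hsum : h0 + g * T * T ≤ 0 := by
    rw [hh, hg]
    nlinarith
  have hle : g * T ≤ g * T * T := le_mul_of_one_le_right (by positivity) hT1
  linarith [neg_abs_le h0, abs_nonneg h0]

/-- Evaluation of a quadratic multiaffine polynomial at a point supported on four coordinates. -/
theorem maEval_four {e : Finset (Fin 8) → ℝ} (he : ∀ B, B.card ≠ 2 → e B = 0) {i j k l : Fin 8}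
    (hij : i ≠ j) (hik : i ≠ k) (hil : i ≠ l) (hjk : j ≠ k) (hjl : j ≠ l) (hkl : k ≠ l)
    (a b p q : ℝ) :
    maEval e (Function.update (Function.update (Function.update (Function.update 0 k p) l q) i a) j b)
      = a * b * e {i, j} + a * p * e {i, k} + a * q * e {i, l} + b * p * e {j, k} +
        b * q * e {j, l} + p * q * e {k, l} := by
  simp only [maEval_update, maEval_zero, del, contr]
  have e0 : e ∅ = 0 := he _ (by simp)
  have e1 : ∀ a, e {a} = 0 := fun a => he _ (by simp)
  have e3 : ∀ a b c, a ≠ b → a ≠ c → b ≠ c → e {a, b, c} = 0 := fun a b c h1 h2 h3 => he _ (by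
    rw [Finset.card_eq_three.2 ⟨a, b, c, h1, h2, h3, rfl⟩]; decide)
  have e4 : e {j, i, l, k} = 0 := he _ (by
    rw [Finset.card_insert_of_notMem (by simp [*, Ne.symm]),
      Finset.card_eq_three.2 ⟨i, l, k, hil, hik, hkl.symm, rfl⟩]
    decide)
  simp [*, Ne.symm]
  rw [Finset.pair_comm l k, Finset.pair_comm j i]
  ring

/-! ### Relations and signs of the coefficients -/

/-- In a degenerate quadrangle the two remaining products of coefficients agree: the Rayleigh
inequality of `∂ₛ∂ₛ'f` says that `(Ap + Bq)(Cp + Dq) ≥ 0` for all real `p, q`, and the discriminant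
of this quadratic form is `(AD - BC)²`. -/
theorem quadrangle {c : Finset (Fin 8) → ℝ} (hc : ∀ B, B.card ≠ 4 → c B = 0)
    (hR : ∀ i j, i ≠ j → Rayleigh c i j) {s s' i j k l : Fin 8}
    (hn : [s, s', i, j, k, l].Nodup) (h0 : c {s, s', i, j} * c {s, s', k, l} = 0) :
    c {s, s', i, k} * c {s, s', j, l} = c {s, s', i, l} * c {s, s', j, k} := by
  simp only [List.nodup_cons, List.mem_cons, not_or, List.not_mem_nil] at hn
  obtain ⟨⟨hss', hsi, hsj, hsk, hsl, -⟩, ⟨hs'i, hs'j, hs'k, hs'l, -⟩, ⟨hij, hik, hil, -⟩,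
    ⟨hjk, hjl, -⟩, ⟨hkl, -⟩, -⟩ := hn
  have hray := ((hR i j hij).contr hsi hsj).contr hs'i hs'j
  have he : ∀ B : Finset (Fin 8), B.card ≠ 2 → contr (contr c s) s' B = 0 := by
    intro B hB
    by_cases h1 : s' ∈ B
    · simp [contr, h1]
    · by_cases h2 : s ∈ insert s' B
      · simp [contr, h2]
      · simp only [contr, h1, h2, if_false]
        apply hc
        rw [Finset.card_insert_of_notMem h2, Finset.card_insert_of_notMem h1]
        omega
  have hval : ∀ a b, s ≠ a → s ≠ b → s' ≠ a → s' ≠ b →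
      contr (contr c s) s' {a, b} = c {s, s', a, b} := by
    intro a b h1 h2 h3 h4
    simp [contr, h1, h2, h3, h4, hss']
  have hform : ∀ p : ℝ, 0 ≤ c {s, s', i, k} * c {s, s', j, k} * (p * p) +
      (c {s, s', i, k} * c {s, s', j, l} + c {s, s', i, l} * c {s, s', j, k}) * p +
      c {s, s', i, l} * c {s, s', j, l} := by
    intro p
    have h := hray (Function.update (Function.update 0 k p) l 1)
    simp only [maEval_four he hij hik hil hjk hjl hkl, hval _ _ hsi hsj hs'i hs'j,
      hval _ _ hsi hsk hs'i hs'k, hval _ _ hsi hsl hs'i hs'l, hval _ _ hsj hsk hs'j hs'k,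
      hval _ _ hsj hsl hs'j hs'l, hval _ _ hsk hsl hs'k hs'l] at h
    linear_combination h - p * h0
  have hd := discrim_le_zero hform
  rw [discrim] at hd
  have hsq : (c {s, s', i, k} * c {s, s', j, l} - c {s, s', i, l} * c {s, s', j, k}) ^ 2 ≤ 0 := by
    linear_combination hd
  linarith [pow_eq_zero_iff (two_ne_zero) |>.1 (le_antisymm hsq (sq_nonneg _))]

theorem maEval_indicator {c : Finset (Fin 8) → ℝ} (hc : ∀ B, B.card ≠ 4 → c B = 0)
    {B : Finset (Fin 8)} (hB : B.card = 4) :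
    maEval c (fun i => if i ∈ B then (1 : ℝ) else 0) = c B := by
  rw [maEval, Finset.sum_eq_single B]
  · rw [Finset.prod_congr rfl (fun i hi => if_pos hi)]
    simp
  · intro B' _ hne
    by_cases h4 : B'.card = 4
    · obtain ⟨i, hi, hiB⟩ : ∃ i ∈ B', i ∉ B := by
        by_contra! hsub
        exact hne (Finset.eq_of_subset_of_card_le hsub (by omega))
      rw [Finset.prod_eq_zero hi (if_neg hiB), mul_zero]
    · simp [hc B' h4]
  · simp

/-- All coefficients of a homogeneous stable polynomial have the same sign: by homogeneity it has
no zero in the (connected) positive orthant, and the coefficients are values on the boundary. -/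
theorem coeff_mul_nonneg {c : Finset (Fin 8) → ℝ} (hc : ∀ B, B.card ≠ 4 → c B = 0)
    (hst : MAStable c) {B B' : Finset (Fin 8)} (hB : B.card = 4) (hB' : B'.card = 4) :
    0 ≤ c B * c B' := by
  have hpos : ∀ x : Fin 8 → ℝ, (∀ i, 0 < x i) → maEval c x ≠ 0 := by
    intro x hx h
    refine hst (fun i => Complex.I * x i) (fun i => by simpa using hx i) ?_
    have : maEval c (fun i => Complex.I * (x i : ℂ)) = maEval c (fun i => (x i : ℂ)) := by
      refine Finset.sum_congr rfl fun S _ => ?_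
      by_cases hS : S.card = 4
      · rw [Finset.prod_mul_distrib, Finset.prod_const, hS, Complex.I_pow_four, one_mul]
      · simp [hc S hS]
    rw [this, maEval_ofReal, h, Complex.ofReal_zero]
  have main : ∀ x y : Fin 8 → ℝ, (∀ i, 0 < x i) → (∀ i, 0 < y i) →
      0 ≤ maEval c x * maEval c y := by
    intro x y hx hy
    by_contra! hlt
    have hconv : Convex ℝ {z : Fin 8 → ℝ | ∀ i, 0 < z i} := by
      intro u hu v hv a b ha hb hab i
      have h1 := hu i
      have h2 := hv i
      change 0 < a * u i + b * v i
      rcases ha.eq_or_lt with rfl | ha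
      · rw [zero_add] at hab
        simpa [hab] using h2
      · positivity
    have hpre := hconv.isPreconnected
    have hcont := (continuous_maEval (R := ℝ) c).continuousOn (s := {z | ∀ i, 0 < z i})
    rcases mul_neg_iff.1 hlt with ⟨h1, h2⟩ | ⟨h1, h2⟩
    · obtain ⟨z, hz, hz0⟩ := hpre.intermediate_value hy hx hcont ⟨h2.le, h1.le⟩
      exact hpos z hz hz0
    · obtain ⟨z, hz, hz0⟩ := hpre.intermediate_value hx hy hcont ⟨h1.le, h2.le⟩
      exact hpos z hz hz0
  set u : Finset (Fin 8) → ℝ → Fin 8 → ℝ := fun S δ i => (if i ∈ S then 1 else 0) + δ with hu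
  have huc : ∀ S, Continuous (u S) := fun S => by fun_prop
  have hu0 : ∀ S, u S 0 = fun i => if i ∈ S then 1 else 0 := fun S => by simp [hu]
  have hlim : Filter.Tendsto (fun δ => maEval c (u B δ) * maEval c (u B' δ))
      (nhdsWithin 0 (Set.Ioi 0)) (nhds (c B * c B')) := by
    rw [← maEval_indicator hc hB, ← maEval_indicator hc hB', ← hu0, ← hu0]
    have hcont : Continuous fun δ => maEval c (u B δ) * maEval c (u B' δ) :=
      ((continuous_maEval c).comp (huc B)).mul ((continuous_maEval c).comp (huc B'))
    exact (hcont.tendsto 0).mono_left nhdsWithin_le_nhds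
  refine ge_of_tendsto hlim ?_
  filter_upwards [self_mem_nhdsWithin] with δ hδ
  have hδ' : 0 < δ := hδ
  refine main _ _ (fun i => ?_) (fun i => ?_) <;> simp only [hu] <;> split_ifs <;> positivity

/-! ### The contradiction -/

/-- Along a valid chain of quadrangles the values `c B = t ^ wt B` propagate. -/
theorem propagate {c : Finset (Fin 8) → ℝ} {t : ℝ} (ht : 0 < t)
    (hc : ∀ B, B.card ≠ 4 → c B = 0) (hnb : ∀ B ∈ nonbases, c B = 0)
    (hR : ∀ i j, i ≠ j → Rayleigh c i j) :
    ∀ (L : List Quad) (K : List (Finset (Fin 8))), ValidChain K L →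
      (∀ B ∈ K, c B = t ^ wt B) → ∀ B ∈ L.map Quad.new, c B = t ^ wt B := by
  intro L
  induction L with
  | nil => simp
  | cons q L ih =>
    intro K hV hK
    obtain ⟨hq, hL⟩ := hV
    have hnew : c q.new = t ^ wt q.new := by
      obtain ⟨s, s', i, j, k, l⟩ := q
      obtain ⟨hn, hdeg, hX, hZ, hW, hw⟩ := hq
      have h0 : c {s, s', i, j} * c {s, s', k, l} = 0 := by
        rcases hdeg with h | h <;> simp [hnb _ h]
      have h := quadrangle hc hR hn h0
      rw [hK _ hX, hK _ hZ, hK _ hW, ← pow_add, ← hw, pow_add] at h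
      exact mul_left_cancel₀ (pow_pos ht _).ne' h
    have hK' : ∀ B ∈ q.new :: K, c B = t ^ wt B := by
      intro B hB
      rcases List.mem_cons.1 hB with rfl | hB
      · exact hnew
      · exact hK B hB
    intro B hB
    rcases List.mem_cons.1 hB with rfl | hB
    · exact hnew
    · exact ih _ hL hK' B hB

/-- The Rayleigh inequality in `x₀, x₁` fails at `testPt` once the coefficients of `startBases` are
normalised. -/
theorem not_stable_normalised {c : Finset (Fin 8) → ℝ} {t : ℝ} (ht : 0 < t)
    (hc : ∀ B, B.card ≠ 4 → c B = 0) (hnb : ∀ B ∈ nonbases, c B = 0)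
    (hM : 0 < c {3, 5, 6, 7}) (hK : ∀ B ∈ startBases, c B = t ^ wt B) : ¬ MAStable c := by
  intro hst
  have hR : ∀ i j, i ≠ j → Rayleigh c i j := fun i j hij => hst.rayleigh hij
  have hprop := propagate ht hc hnb hR quads startBases validChain_quads hK
  have hval : ∀ B : Finset (Fin 8), c B =
      layerCoeff 0 B + layerCoeff 1 B * t + layerCoeff 2 B * t ^ 2 +
        if B = {3, 5, 6, 7} then c {3, 5, 6, 7} else 0 := by
    intro B
    by_cases hBM : B = {3, 5, 6, 7}
    · simp [hBM, layerCoeff]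
    by_cases h4 : B.card = 4
    · by_cases hn : B ∈ nonbases
      · simp [hn, hBM, hnb B hn, layerCoeff]
      · have : c B = t ^ wt B := by
          rcases bases_covered B h4 hn hBM with h | h
          · exact hK B h
          · exact hprop B h
        rcases wt_le_two B with h | h | h <;> simp [this, h, h4, hn, hBM, layerCoeff]
    · simp [h4, hBM, hc B h4, layerCoeff]
  have heval : ∀ a b : ℤ, maEval c (fun i => (testPt a b i : ℝ)) =
      layer 0 (testPt a b) + layer 1 (testPt a b) * t + layer 2 (testPt a b) * t ^ 2 -
        c {3, 5, 6, 7} := by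
    intro a b
    have hprodM : ∏ i ∈ ({3, 5, 6, 7} : Finset (Fin 8)), (testPt a b i : ℝ) = -1 := by
      rw [Finset.prod_insert (by decide), Finset.prod_insert (by decide),
        Finset.prod_insert (by decide), Finset.prod_singleton]
      simp [testPt]
    have hterm : ∀ B : Finset (Fin 8), c B * ∏ i ∈ B, (testPt a b i : ℝ) =
        layerCoeff 0 B * (∏ i ∈ B, (testPt a b i : ℝ)) +
        layerCoeff 1 B * (∏ i ∈ B, (testPt a b i : ℝ)) * t +
        layerCoeff 2 B * (∏ i ∈ B, (testPt a b i : ℝ)) * t ^ 2 +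
        if B = {3, 5, 6, 7} then -c {3, 5, 6, 7} else 0 := by
      intro B
      rw [hval B]
      by_cases hBM : B = {3, 5, 6, 7}
      · rw [if_pos hBM, if_pos hBM, hBM, hprodM]
        ring
      · rw [if_neg hBM, if_neg hBM]
        ring
    have hsum : maEval c (fun i => (testPt a b i : ℝ)) =
        ∑ B : Finset (Fin 8), c B * ∏ i ∈ B, (testPt a b i : ℝ) := rfl
    rw [hsum, Finset.sum_congr rfl fun B _ => hterm B, Finset.sum_add_distrib,
      Finset.sum_add_distrib, Finset.sum_add_distrib, ← Finset.sum_mul, ← Finset.sum_mul,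
      Finset.sum_ite_eq', if_pos (Finset.mem_univ _), layer_cast, layer_cast, layer_cast]
    ring
  have hpt : ∀ a b : ℤ, Function.update (Function.update
      (fun i => (testPt 0 0 i : ℝ)) 0 (a : ℝ)) 1 (b : ℝ) = fun i => (testPt a b i : ℝ) := by
    intro a b
    ext i
    fin_cases i <;> simp [testPt, Function.update]
  have h := hR 0 1 (by decide) (fun i => (testPt 0 0 i : ℝ))
  have h00 := hpt 0 0
  have h10 := hpt 1 0
  have h01 := hpt 0 1
  have h11 := hpt 1 1
  simp only [Int.cast_zero, Int.cast_one] at h00 h10 h01 h11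
  obtain ⟨⟨a0, a1, a2⟩, ⟨b0, b1, b2⟩, ⟨d0, d1, d2⟩, ⟨e0, e1, e2⟩⟩ := layer_table
  rw [h00, h10, h01, h11, heval, heval, heval, heval, a0, a1, a2, b0, b1, b2, d0, d1, d2, e0, e1,
    e2] at h
  push_cast at h
  nlinarith [mul_pos ht hM]

theorem MAStable.scale {c : Finset (Fin 8) → ℝ} (hst : MAStable c) {C : ℝ} (hC : C ≠ 0)
    {μ : Fin 8 → ℝ} (hμ : ∀ i, 0 < μ i) : MAStable fun B => C * c B * ∏ i ∈ B, μ i := by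
  intro z hz h
  refine hst (fun i => μ i * z i) (fun i => by simpa using mul_pos (hμ i) (hz i)) ?_
  have hCC : (C : ℂ) ≠ 0 := by exact_mod_cast hC
  refine (mul_eq_zero.1 (?_ : (C : ℂ) * _ = 0)).resolve_left hCC
  rw [← h, maEval, maEval, Finset.mul_sum]
  refine Finset.sum_congr rfl fun B _ => ?_
  rw [Finset.prod_mul_distrib]
  simp
  ring

/-- No coefficient vector supported on the bases of `P₁` is stable. -/
theorem not_stable {c : Finset (Fin 8) → ℝ} (hsupp : ∀ B, c B ≠ 0 ↔ B.card = 4 ∧ B ∉ nonbases) :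
    ¬ MAStable c := by
  intro hst
  have hc : ∀ B : Finset (Fin 8), B.card ≠ 4 → c B = 0 := fun B hB => by
    by_contra h
    exact hB ((hsupp B).1 h).1
  have hnb : ∀ B ∈ nonbases, c B = 0 := fun B hB => by
    by_contra h
    exact ((hsupp B).1 h).2 hB
  have hc0 : c {0, 1, 2, 3} ≠ 0 := (hsupp _).2 (by decide)
  -- the coefficients relative to the basis `{0, 1, 2, 3}`
  set r : Finset (Fin 8) → ℝ := fun B => c B / c {0, 1, 2, 3} with hr
  have hrpos : ∀ B : Finset (Fin 8), B.card = 4 ∧ B ∉ nonbases → 0 < r B := by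
    intro B hB
    have h1 := coeff_mul_nonneg hc hst hB.1 (B' := {0, 1, 2, 3}) (by decide)
    have h2 : r B = c B * c {0, 1, 2, 3} / c {0, 1, 2, 3} ^ 2 := by
      simp only [hr]
      field_simp
    refine lt_of_le_of_ne ?_ (div_ne_zero ((hsupp B).2 hB) hc0).symm
    rw [h2]
    positivity
  have p35 := hrpos {0, 1, 2, 5} (by decide)
  have p06 := hrpos {1, 2, 3, 6} (by decide)
  have p14 := hrpos {0, 2, 3, 4} (by decide)
  have p27 := hrpos {0, 1, 3, 7} (by decide)
  have p25 := hrpos {0, 1, 3, 5} (by decide)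
  have p16 := hrpos {0, 2, 3, 6} (by decide)
  have p24 := hrpos {0, 1, 3, 4} (by decide)
  have p07 := hrpos {1, 2, 3, 7} (by decide)
  have pM := hrpos {3, 5, 6, 7} (by decide)
  have r0 : r {0, 1, 2, 3} = 1 := div_self hc0
  -- the exchanges from `{0, 1, 2, 3}` to the start bases form a spanning tree on the ground set, so
  -- the scaling factors are determined one after the other, starting from the element `2`
  obtain ⟨m5, h5⟩ : ∃ m, m = 1 / r {0, 1, 3, 5} := ⟨_, rfl⟩
  obtain ⟨m3, h3⟩ : ∃ m, m = r {0, 1, 2, 5} * m5 := ⟨_, rfl⟩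
  obtain ⟨m7, h7⟩ : ∃ m, m = 1 / r {0, 1, 3, 7} := ⟨_, rfl⟩
  obtain ⟨m4, h4⟩ : ∃ m, m = 1 / r {0, 1, 3, 4} := ⟨_, rfl⟩
  obtain ⟨m1, h1⟩ : ∃ m, m = r {0, 2, 3, 4} * m4 := ⟨_, rfl⟩
  obtain ⟨m6, h6⟩ : ∃ m, m = m1 / r {0, 2, 3, 6} := ⟨_, rfl⟩
  obtain ⟨m0, h0⟩ : ∃ m, m = r {1, 2, 3, 6} * m6 := ⟨_, rfl⟩
  have q5 : 0 < m5 := by rw [h5]; positivity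
  have q3 : 0 < m3 := by rw [h3]; positivity
  have q7 : 0 < m7 := by rw [h7]; positivity
  have q4 : 0 < m4 := by rw [h4]; positivity
  have q1 : 0 < m1 := by rw [h1]; positivity
  have q6 : 0 < m6 := by rw [h6]; positivity
  have q0 : 0 < m0 := by rw [h0]; positivity
  set μ : Fin 8 → ℝ := ![m0, m1, 1, m3, m4, m5, m6, m7] with hμ
  have hμpos : ∀ i, 0 < μ i := by
    intro i
    fin_cases i
    exacts [q0, q1, one_pos, q3, q4, q5, q6, q7]
  set C : ℝ := 1 / (c {0, 1, 2, 3} * (m0 * m1 * m3)) with hC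
  have hCne : C ≠ 0 := by
    rw [hC]
    positivity
  have hval : ∀ B, C * c B * ∏ i ∈ B, μ i = r B * (∏ i ∈ B, μ i) / (m0 * m1 * m3) := by
    intro B
    simp only [hC, hr]
    field_simp
  have hprod : ∀ a b d e : Fin 8, [a, b, d, e].Nodup →
      ∏ i ∈ ({a, b, d, e} : Finset (Fin 8)), μ i = μ a * (μ b * (μ d * μ e)) := by
    intro a b d e hn
    simp only [List.nodup_cons, List.mem_cons, not_or, List.not_mem_nil] at hn
    rw [Finset.prod_insert (by simp [hn]), Finset.prod_insert (by simp [hn]),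
      Finset.prod_insert (by simp [hn]), Finset.prod_singleton]
  have e0 : μ 0 = m0 := rfl
  have e1 : μ 1 = m1 := rfl
  have e2 : μ 2 = 1 := rfl
  have e3 : μ 3 = m3 := rfl
  have e4 : μ 4 = m4 := rfl
  have e5 : μ 5 = m5 := rfl
  have e6 : μ 6 = m6 := rfl
  have e7 : μ 7 = m7 := rfl
  refine not_stable_normalised (c := fun B => C * c B * ∏ i ∈ B, μ i)
    (t := C * c {1, 2, 3, 7} * ∏ i ∈ {1, 2, 3, 7}, μ i) ?_ ?_ ?_ ?_ ?_ (hst.scale hCne hμpos)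
  · rw [hval]
    have := Finset.prod_pos fun i (_ : i ∈ ({1, 2, 3, 7} : Finset (Fin 8))) => hμpos i
    positivity
  · intro B hB
    simp [hc B hB]
  · intro B hB
    simp [hnb B hB]
  · rw [hval]
    have := Finset.prod_pos fun i (_ : i ∈ ({3, 5, 6, 7} : Finset (Fin 8))) => hμpos i
    positivity
  · have w : wt {0, 1, 2, 3} = 0 ∧ wt {0, 1, 2, 5} = 0 ∧ wt {1, 2, 3, 6} = 0 ∧
        wt {0, 2, 3, 4} = 0 ∧ wt {0, 1, 3, 7} = 0 ∧ wt {0, 1, 3, 5} = 0 ∧ wt {0, 2, 3, 6} = 0 ∧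
        wt {0, 1, 3, 4} = 0 ∧ wt {1, 2, 3, 7} = 1 := by decide +kernel
    obtain ⟨w1, w2, w3, w4, w5, w6, w7, w8, w9⟩ := w
    simp only [startBases, List.forall_mem_cons]
    refine ⟨?_, ?_, ?_, ?_, ?_, ?_, ?_, ?_, ?_, by simp⟩
    · rw [w1, pow_zero, hval, hprod _ _ _ _ (by decide), e0, e1, e2, e3, r0]
      field_simp
    · rw [w2, pow_zero, hval, hprod _ _ _ _ (by decide), e0, e1, e2, e5, h3]
      field_simp
    · rw [w3, pow_zero, hval, hprod _ _ _ _ (by decide), e1, e2, e3, e6, h0]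
      field_simp
    · rw [w4, pow_zero, hval, hprod _ _ _ _ (by decide), e0, e2, e3, e4, h1]
      field_simp
    · rw [w5, pow_zero, hval, hprod _ _ _ _ (by decide), e0, e1, e3, e7, h7]
      field_simp
    · rw [w6, pow_zero, hval, hprod _ _ _ _ (by decide), e0, e1, e3, e5, h5]
      field_simp
    · rw [w7, pow_zero, hval, hprod _ _ _ _ (by decide), e0, e2, e3, e6, h6]
      field_simp
    · rw [w8, pow_zero, hval, hprod _ _ _ _ (by decide), e0, e1, e3, e4, h4]
      field_simp
    · rw [w9, pow_one]

/-! ### Passage to `MvPolynomial` -/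

/-- The indicator vector of `B` as a monomial exponent. -/
noncomputable def ind (B : Finset (Fin 8)) : Fin 8 →₀ ℕ :=
  Finsupp.equivFunOnFinite.symm fun i => if i ∈ B then 1 else 0

theorem ind_injective : Function.Injective ind := by
  intro B B' h
  ext i
  have := DFunLike.congr_fun h i
  simp only [ind, Finsupp.equivFunOnFinite_symm_apply_apply] at this
  by_cases h1 : i ∈ B <;> by_cases h2 : i ∈ B' <;> simp_all

/-- A polynomial all of whose exponents are indicator vectors is evaluated through its vector of
coefficients. -/
theorem aeval_eq_maEval {P : MvPolynomial (Fin 8) ℝ}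
    (hP : ∀ m ∈ P.support, ∃ B, m = ind B) (z : Fin 8 → ℂ) :
    MvPolynomial.aeval z P = maEval (fun B => P.coeff (ind B)) z := by
  have hsub : P.support ⊆ Finset.univ.image ind := by
    intro m hm
    obtain ⟨B, rfl⟩ := hP m hm
    simp
  rw [MvPolynomial.aeval_def, MvPolynomial.eval₂_eq', Finset.sum_subset hsub,
    Finset.sum_image ind_injective.injOn]
  · refine Finset.sum_congr rfl fun B _ => ?_
    congr 1
    simp [ind, pow_ite, Finset.prod_ite_mem]
  · intro m _ hm
    simp [MvPolynomial.notMem_support_iff.1 hm]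

/-- the matroid `P₁` (the relaxation of `P₈` by the circuit-hyperplane
`{3,5,6,7}`) does not have the weak half-plane property: no homogeneous stable
polynomial has support exactly the set of indicator vectors of bases of `P₁`. -/
theorem P1_not_whpp :
    ¬ ∃ P : MvPolynomial (Fin 8) ℝ, (∃ d, P.IsHomogeneous d) ∧ IsStablePoly P ∧
      suppSet P = {α : Fin 8 → ℕ | ∃ B : Finset (Fin 8), isBasisP1 B ∧
        α = fun i => if i ∈ B then 1 else 0} := by
  rintro ⟨P, -, hst, hsupp⟩
  have hmem : ∀ m : Fin 8 →₀ ℕ, m ∈ P.support ↔ ∃ B, isBasisP1 B ∧ m = ind B := by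
    intro m
    have h1 : m ∈ P.support ↔ (m : Fin 8 → ℕ) ∈ suppSet P := by
      simp [suppSet]
    rw [h1, hsupp]
    simp only [Set.mem_ofPred_eq, ind, Equiv.eq_symm_apply]
    rfl
  refine not_stable (c := fun B => P.coeff (ind B)) (fun B => ?_) (fun z hz => ?_)
  · rw [← MvPolynomial.mem_support_iff, hmem, ← isBasisP1_iff]
    constructor
    · rintro ⟨B', hB', h⟩
      rwa [ind_injective h]
    · exact fun h => ⟨B, h, rfl⟩
  · rw [← aeval_eq_maEval (fun m hm => ?_)]
    · exact hst z hz
    · obtain ⟨B, -, h⟩ := (hmem m).1 hm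
      exact ⟨B, h⟩
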